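/- arXiv:1908.00646 — 4 statements merged into one kernel-verified Lean document; each statement's English description precedes it below -/
import Mathlib

section
/- Let n be a positive integer and let Z_i, Z_j ∈ ℝ^{n×2} be two landmark configuration matrices. Write the 2×2 matrix Z_jᵀ Z_i as [[a, b], [c, d]]. Then the minimum over all rotation matrices Q ∈ SO(2) of the squared Frobenius norm ‖Z_j Q − Z_i‖_F² exists and equals tr(Z_i Z_iᵀ) + tr(Z_j Z_jᵀ) − 2·√((a + d)² + (c − b)²). -/
open Matrix

/-!
Expanding the square gives `‖Y Q - X‖² = ‖X‖² + ‖Y‖² - 2 tr(Qᵀ Yᵀ X)` for orthogonal `Q`, so the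
task is to maximise the linear functional `Q ↦ tr(Qᵀ M)`, `M = Yᵀ X`, over the rotations.
Identifying the rotation by `θ` with the point `exp(iθ)` of the unit circle in `ℂ`, this functional
is the inner product with `w = (M₀₀ + M₁₁) + i (M₁₀ - M₀₁)`, whose maximum on the circle is `‖w‖`.
-/

theorem isGreatest_inner_sphere {E : Type*} [NormedAddCommGroup E] [InnerProductSpace ℝ E]
    [Nontrivial E] (v : E) :
    IsGreatest ((fun x : E => inner ℝ x v) '' Metric.sphere 0 1) ‖v‖ := by
  constructor
  · rcases eq_or_ne v 0 with rfl | hv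
    · obtain ⟨x, hx⟩ := (NormedSpace.sphere_nonempty (x := (0 : E)) (r := 1)).2 zero_le_one
      exact ⟨x, hx, by simp⟩
    · refine ⟨‖v‖⁻¹ • v, by simp [norm_smul, hv], ?_⟩
      simp [real_inner_smul_left, hv, pow_two]
  · rintro _ ⟨x, hx, rfl⟩
    simpa [mem_sphere_zero_iff_norm.1 hx] using real_inner_le_norm x v

section Procrustes

variable {R m k l : Type*} [CommRing R] [Fintype m] [Fintype k] [Fintype l]

/-- The Procrustes objective `‖Y Q - X‖_F²`: the squared Frobenius distance from `X` to the
transformed configuration `Y Q`, encoded as the trace of a Gram matrix so that it makes sense over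
any commutative ring. -/
def procrustesCost (X : Matrix m l R) (Y : Matrix m k R) (Q : Matrix k l R) : R :=
  trace ((Y * Q - X)ᵀ * (Y * Q - X))

theorem procrustesCost_eq_of_mul_transpose_eq_one [DecidableEq k] (X : Matrix m l R)
    (Y : Matrix m k R) {Q : Matrix k l R} (hQ : Q * Qᵀ = 1) :
    procrustesCost X Y Q =
      trace (X * Xᵀ) + trace (Y * Yᵀ) - 2 * trace (Qᵀ * (Yᵀ * X)) := by
  have hYY : trace ((Y * Q)ᵀ * (Y * Q)) = trace (Y * Yᵀ) := by
    rw [trace_mul_comm, transpose_mul, Matrix.mul_assoc, ← Matrix.mul_assoc Q, hQ, Matrix.one_mul]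
  have hYX : trace ((Y * Q)ᵀ * X) = trace (Qᵀ * (Yᵀ * X)) := by
    rw [transpose_mul, Matrix.mul_assoc]
  have hXY : trace (Xᵀ * (Y * Q)) = trace (Qᵀ * (Yᵀ * X)) := by
    rw [← hYX, ← trace_transpose, transpose_mul, transpose_transpose]
  have hXX : trace (Xᵀ * X) = trace (X * Xᵀ) := trace_mul_comm _ _
  rw [procrustesCost, transpose_sub, Matrix.sub_mul, Matrix.mul_sub, Matrix.mul_sub]
  simp only [trace_sub, hYY, hYX, hXY, hXX]
  ring

theorem isLeast_procrustesCost_of_isGreatest_trace [DecidableEq k] (X : Matrix m l ℝ)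
    (Y : Matrix m k ℝ) {S : Set (Matrix k l ℝ)} (hS : ∀ Q ∈ S, Q * Qᵀ = 1) {r : ℝ}
    (hr : IsGreatest ((fun Q => trace (Qᵀ * (Yᵀ * X))) '' S) r) :
    IsLeast (procrustesCost X Y '' S) (trace (X * Xᵀ) + trace (Y * Yᵀ) - 2 * r) := by
  have hanti : Antitone fun t : ℝ => trace (X * Xᵀ) + trace (Y * Yᵀ) - 2 * t :=
    fun s t hst => by dsimp only; linarith
  have hcost : Set.EqOn (procrustesCost X Y)
      (fun Q => trace (X * Xᵀ) + trace (Y * Yᵀ) - 2 * trace (Qᵀ * (Yᵀ * X))) S :=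
    fun Q hQ => procrustesCost_eq_of_mul_transpose_eq_one X Y (hS Q hQ)
  simpa only [hcost.image_eq, Set.image_image] using hanti.map_isGreatest hr

end Procrustes

theorem specialOrthogonalGroup_fin_two_eq_image_leftMulMatrix :
    (specialOrthogonalGroup (Fin 2) ℝ : Set (Matrix (Fin 2) (Fin 2) ℝ)) =
      Algebra.leftMulMatrix Complex.basisOneI '' Metric.sphere 0 1 := by
  ext Q
  simp only [SetLike.mem_coe, Set.mem_image, mem_sphere_zero_iff_norm,
    Algebra.leftMulMatrix_complex, Complex.norm_eq_sqrt_sq_add_sq, Real.sqrt_eq_one]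
  constructor
  · rw [mem_specialOrthogonalGroup_fin_two_iff]
    rintro ⟨hdiag, hoff, hunit⟩
    refine ⟨⟨Q 0 0, Q 1 0⟩, by rwa [hoff, neg_sq] at hunit, ?_⟩
    simpa only [← hdiag, hoff] using (eta_fin_two Q).symm
  · rintro ⟨z, hz, rfl⟩
    exact of_mem_specialOrthogonalGroup_fin_two_iff.2 ⟨rfl, rfl, by rwa [neg_sq]⟩

theorem trace_transpose_leftMulMatrix_complex_mul (z : ℂ) (M : Matrix (Fin 2) (Fin 2) ℝ) :
    trace ((Algebra.leftMulMatrix Complex.basisOneI z)ᵀ * M) =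
      inner ℝ z ⟨M 0 0 + M 1 1, M 1 0 - M 0 1⟩ := by
  simp only [Algebra.leftMulMatrix_complex, trace_fin_two, mul_apply, Fin.sum_univ_two,
    transpose_apply, of_apply, cons_val, Complex.inner, Complex.mul_re, Complex.conj_re,
    Complex.conj_im]
  ring

theorem isGreatest_trace_transpose_mul_specialOrthogonalGroup_fin_two
    (M : Matrix (Fin 2) (Fin 2) ℝ) :
    IsGreatest ((fun Q => trace (Qᵀ * M)) '' (specialOrthogonalGroup (Fin 2) ℝ))
      √((M 0 0 + M 1 1) ^ 2 + (M 1 0 - M 0 1) ^ 2) := by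
  simpa only [specialOrthogonalGroup_fin_two_eq_image_leftMulMatrix, Set.image_image,
    trace_transpose_leftMulMatrix_complex_mul, Complex.norm_eq_sqrt_sq_add_sq] using
    isGreatest_inner_sphere (⟨M 0 0 + M 1 1, M 1 0 - M 0 1⟩ : ℂ)

theorem stmt0_general {m : Type*} [Fintype m] (Zi Zj : Matrix m (Fin 2) ℝ)
    (a b c d : ℝ)
    (ha : a = (Zjᵀ * Zi) 0 0) (hb : b = (Zjᵀ * Zi) 0 1)
    (hc : c = (Zjᵀ * Zi) 1 0) (hd : d = (Zjᵀ * Zi) 1 1) :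
    IsLeast
      {x : ℝ | ∃ Q : Matrix (Fin 2) (Fin 2) ℝ, Qᵀ * Q = 1 ∧ Q.det = 1 ∧
        x = trace ((Zj * Q - Zi)ᵀ * (Zj * Q - Zi))}
      (trace (Zi * Ziᵀ) + trace (Zj * Zjᵀ) - 2 * √((a + d) ^ 2 + (c - b) ^ 2)) := by
  subst ha hb hc hd
  convert isLeast_procrustesCost_of_isGreatest_trace Zi Zj
    (fun Q hQ => (mem_orthogonalGroup_iff _ _).1 (mem_specialOrthogonalGroup_iff.1 hQ).1)
    (isGreatest_trace_transpose_mul_specialOrthogonalGroup_fin_two (Zjᵀ * Zi)) using 1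
  ext x
  simp only [Set.mem_ofPred_eq, Set.mem_image, SetLike.mem_coe, mem_specialOrthogonalGroup_iff,
    mem_orthogonalGroup_iff', procrustesCost, and_assoc, eq_comm (a := x)]

/-- For `Z_i, Z_j ∈ ℝ^{n×2}`, writing `Z_jᵀ Z_i = [[a,b],[c,d]]`, the minimum
over rotation matrices `Q ∈ SO(2)` of `‖Z_j Q − Z_i‖_F²` exists and equals
`tr(Z_i Z_iᵀ) + tr(Z_j Z_jᵀ) − 2 √((a+d)² + (c−b)²)`. -/
theorem stmt0 (n : ℕ) (hn : 0 < n) (Zi Zj : Matrix (Fin n) (Fin 2) ℝ)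
    (a b c d : ℝ)
    (ha : a = (Zjᵀ * Zi) 0 0) (hb : b = (Zjᵀ * Zi) 0 1)
    (hc : c = (Zjᵀ * Zi) 1 0) (hd : d = (Zjᵀ * Zi) 1 1) :
    IsLeast
      {x : ℝ | ∃ Q : Matrix (Fin 2) (Fin 2) ℝ, Qᵀ * Q = 1 ∧ Q.det = 1 ∧
        x = Matrix.trace ((Zj * Q - Zi)ᵀ * (Zj * Q - Zi))}
      (Matrix.trace (Zi * Ziᵀ) + Matrix.trace (Zj * Zjᵀ)
        - 2 * Real.sqrt ((a + d) ^ 2 + (c - b) ^ 2)) := by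
  exact stmt0_general Zi Zj a b c d ha hb hc hd
end

section
/- Let n be a positive integer and let Z_i, Z_j ∈ ℝ^{n×2} be two landmark configuration matrices such that det(Z_jᵀ Z_i) ≥ 0. Write the 2×2 matrix Z_jᵀ Z_i as [[a, b], [c, d]]. Then the minimum over all orthogonal matrices Q ∈ O(2) of the squared Frobenius norm ‖Z_j Q − Z_i‖_F² equals tr(Z_i Z_iᵀ) + tr(Z_j Z_jᵀ) − 2·√((a + d)² + (c − b)²). -/
open Matrix

/-!
For orthogonal `Q` the objective is `‖Z_i‖² + ‖Z_j‖² - 2 tr (Qᵀ M)` with `M = Z_jᵀ Z_i`, so the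
problem is to maximise `tr (Qᵀ M)`; the maximum is the nuclear norm `s₁ + s₂` of `M`, and
`(s₁ + s₂)² = ‖M‖² + 2 |det M|`. For the upper bound, every `2 × 2` matrix `N` satisfies
`(tr N)² + (N₁₀ - N₀₁)² = ‖N‖² + 2 det N`; take `N = Qᵀ M`, whose norm is that of `M` and whose
determinant is `± det M`. The bound is attained at the normalisation of `M + ε cof M`, where
`ε = ±1` is the sign of `det M`: by Cayley–Hamilton for `Mᵀ M`, this matrix is a multiple of an
orthogonal one.
-/

section Procrustes

variable {m n R : Type*} [Fintype m] [Fintype n] [DecidableEq n]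

theorem trace_mul_sub_transpose_mul_self [CommRing R] (W Z : Matrix m n R) {Q : Matrix n n R}
    (hQ : Qᵀ * Q = 1) :
    trace ((Z * Q - W)ᵀ * (Z * Q - W)) =
      trace (W * Wᵀ) + trace (Z * Zᵀ) - 2 * trace (Qᵀ * (Zᵀ * W)) := by
  have hZQ : trace ((Z * Q)ᵀ * (Z * Q)) = trace (Z * Zᵀ) := by
    rw [trace_mul_comm, transpose_mul, Matrix.mul_assoc, ← Matrix.mul_assoc Q,
      mul_eq_one_comm.mp hQ, Matrix.one_mul]
  have hcross : trace ((Z * Q)ᵀ * W) = trace (Qᵀ * (Zᵀ * W)) := by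
    rw [transpose_mul, Matrix.mul_assoc]
  have hcross' : trace (Wᵀ * (Z * Q)) = trace ((Z * Q)ᵀ * W) := by
    rw [← trace_transpose, transpose_mul, transpose_transpose]
  rw [transpose_sub, Matrix.sub_mul, Matrix.mul_sub, Matrix.mul_sub, trace_sub, trace_sub,
    trace_sub, hZQ, hcross', hcross, trace_mul_comm Wᵀ W]
  ring

theorem isLeast_procrustes_of_isGreatest [CommRing R] [PartialOrder R] [IsOrderedRing R]
    {W Z : Matrix m n R} {s : R}
    (hs : IsGreatest {x | ∃ Q : Matrix n n R, Qᵀ * Q = 1 ∧ x = trace (Qᵀ * (Zᵀ * W))} s) :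
    IsLeast {x | ∃ Q : Matrix n n R, Qᵀ * Q = 1 ∧ x = trace ((Z * Q - W)ᵀ * (Z * Q - W))}
      (trace (W * Wᵀ) + trace (Z * Zᵀ) - 2 * s) := by
  obtain ⟨⟨Q₀, hQ₀, rfl⟩, hmax⟩ := hs
  refine ⟨⟨Q₀, hQ₀, (trace_mul_sub_transpose_mul_self W Z hQ₀).symm⟩, ?_⟩
  rintro _ ⟨Q, hQ, rfl⟩
  rw [trace_mul_sub_transpose_mul_self W Z hQ]
  have hle : trace (Qᵀ * (Zᵀ * W)) ≤ trace (Q₀ᵀ * (Zᵀ * W)) := hmax ⟨Q, hQ, rfl⟩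
  exact sub_le_sub_left (mul_le_mul_of_nonneg_left hle zero_le_two) _

end Procrustes

theorem trace_transpose_add_smul_adjugate_mul {n R : Type*} [Fintype n] [DecidableEq n]
    [CommRing R] (M : Matrix n n R) (ε : R) :
    trace ((Mᵀ + ε • M.adjugate) * M) = trace (Mᵀ * M) + Fintype.card n * (ε * M.det) := by
  rw [Matrix.add_mul, smul_mul, adjugate_mul, trace_add, trace_smul, trace_smul, trace_one,
    smul_eq_mul, smul_eq_mul]
  ring

section FinTwo

variable {R : Type*} [CommRing R]

theorem trace_sq_add_sq_fin_two (M : Matrix (Fin 2) (Fin 2) R) :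
    trace M ^ 2 + (M 1 0 - M 0 1) ^ 2 = trace (Mᵀ * M) + 2 * M.det := by
  simp only [trace_fin_two, det_fin_two, mul_apply, transpose_apply, Fin.sum_univ_two]
  ring

theorem add_adjugate_fin_two (M : Matrix (Fin 2) (Fin 2) R) :
    M + M.adjugate = trace M • 1 := by
  rw [adjugate_fin_two, trace_fin_two]
  ext i j
  fin_cases i <;> fin_cases j <;> simp [add_comm]

theorem transpose_add_smul_adjugate_mul_self_fin_two (M : Matrix (Fin 2) (Fin 2) R) {ε : R}
    (hε : ε * ε = 1) :
    (Mᵀ + ε • M.adjugate) * (M + ε • M.adjugateᵀ) =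
      (trace (Mᵀ * M) + 2 * (ε * M.det)) • 1 := by
  have hadj : M.adjugate * M.adjugateᵀ = (Mᵀ * M).adjugate := by
    rw [adjugate_mul_distrib, adjugate_transpose]
  have hcof : Mᵀ * M.adjugateᵀ = M.det • 1 := by
    rw [← transpose_mul, adjugate_mul, transpose_smul, transpose_one]
  calc (Mᵀ + ε • M.adjugate) * (M + ε • M.adjugateᵀ)
      = (Mᵀ * M + (ε * ε) • (M.adjugate * M.adjugateᵀ)) +
          ε • (Mᵀ * M.adjugateᵀ + M.adjugate * M) := by
        simp only [Matrix.add_mul, Matrix.mul_add, smul_mul, Matrix.mul_smul, smul_smul, smul_add]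
        abel
    _ = trace (Mᵀ * M) • 1 + ε • (M.det • 1 + M.det • 1) := by
        rw [hε, one_smul, hadj, add_adjugate_fin_two, hcof, adjugate_mul]
    _ = (trace (Mᵀ * M) + 2 * (ε * M.det)) • 1 := by
        module

theorem sq_trace_transpose_mul_le_fin_two [LinearOrder R] [IsStrictOrderedRing R]
    (M : Matrix (Fin 2) (Fin 2) R) {Q : Matrix (Fin 2) (Fin 2) R} (hQ : Qᵀ * Q = 1) :
    trace (Qᵀ * M) ^ 2 ≤ trace (Mᵀ * M) + 2 * |M.det| := by
  have hnorm : (Qᵀ * M)ᵀ * (Qᵀ * M) = Mᵀ * M := by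
    rw [transpose_mul, transpose_transpose, Matrix.mul_assoc, ← Matrix.mul_assoc Q,
      mul_eq_one_comm.mp hQ, Matrix.one_mul]
  have hdetQ : |Q.det| = 1 := by
    have hsq : Q.det ^ 2 = 1 := by
      simpa only [det_mul, det_transpose, det_one, ← sq] using congrArg det hQ
    rw [← abs_pow_eq_one _ two_ne_zero, hsq, abs_one]
  have hdet : (Qᵀ * M).det ≤ |M.det| := by
    calc (Qᵀ * M).det ≤ |(Qᵀ * M).det| := le_abs_self _
      _ = |M.det| := by rw [det_mul, det_transpose, abs_mul, hdetQ, one_mul]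
  calc trace (Qᵀ * M) ^ 2
      ≤ trace (Qᵀ * M) ^ 2 + ((Qᵀ * M) 1 0 - (Qᵀ * M) 0 1) ^ 2 :=
        le_add_of_nonneg_right (sq_nonneg _)
    _ = trace (Mᵀ * M) + 2 * (Qᵀ * M).det := by rw [trace_sq_add_sq_fin_two, hnorm]
    _ ≤ trace (Mᵀ * M) + 2 * |M.det| := by gcongr

end FinTwo

theorem exists_orthogonal_trace_transpose_mul_eq_fin_two (M : Matrix (Fin 2) (Fin 2) ℝ) :
    ∃ Q : Matrix (Fin 2) (Fin 2) ℝ, Qᵀ * Q = 1 ∧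
      trace (Qᵀ * M) = √(trace (Mᵀ * M) + 2 * |M.det|) := by
  have hnonneg : 0 ≤ trace (Mᵀ * M) := (posSemidef_conjTranspose_mul_self M).trace_nonneg
  obtain ⟨ε, hε, hεdet⟩ : ∃ ε : ℝ, ε * ε = 1 ∧ ε * M.det = |M.det| := by
    rcases abs_choice M.det with h | h
    · exact ⟨1, by norm_num, by rw [h, one_mul]⟩
    · exact ⟨-1, by norm_num, by rw [h, neg_one_mul]⟩
  set r := √(trace (Mᵀ * M) + 2 * |M.det|)
  have hsq : r * r = trace (Mᵀ * M) + 2 * |M.det| := Real.mul_self_sqrt (by positivity)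
  rcases eq_or_ne r 0 with hr0 | hr0
  · have htrace : trace (Mᵀ * M) = 0 := by nlinarith [abs_nonneg M.det]
    have hM : M = 0 := trace_conjTranspose_mul_self_eq_zero_iff.mp htrace
    exact ⟨1, by simp, by rw [hr0, hM, Matrix.mul_zero, trace_zero]⟩
  · have htranspose : (r⁻¹ • (M + ε • M.adjugateᵀ))ᵀ = r⁻¹ • (Mᵀ + ε • M.adjugate) := by
      simp only [transpose_smul, transpose_add, transpose_transpose]
    refine ⟨r⁻¹ • (M + ε • M.adjugateᵀ), ?_, ?_⟩
    · rw [htranspose, smul_mul, Matrix.mul_smul,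
        transpose_add_smul_adjugate_mul_self_fin_two M hε, hεdet, ← hsq, smul_smul, smul_smul,
        ← mul_assoc, inv_mul_cancel_right₀ hr0, inv_mul_cancel₀ hr0, one_smul]
    · rw [htranspose, smul_mul, trace_smul, trace_transpose_add_smul_adjugate_mul,
        Fintype.card_fin, Nat.cast_ofNat, hεdet, ← hsq, smul_eq_mul, inv_mul_cancel_left₀ hr0]

theorem isGreatest_trace_transpose_mul_fin_two (M : Matrix (Fin 2) (Fin 2) ℝ) :
    IsGreatest {x | ∃ Q : Matrix (Fin 2) (Fin 2) ℝ, Qᵀ * Q = 1 ∧ x = trace (Qᵀ * M)}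
      √(trace (Mᵀ * M) + 2 * |M.det|) := by
  obtain ⟨Q₀, hQ₀, htrace⟩ := exists_orthogonal_trace_transpose_mul_eq_fin_two M
  refine ⟨⟨Q₀, hQ₀, htrace.symm⟩, ?_⟩
  rintro _ ⟨Q, hQ, rfl⟩
  exact Real.le_sqrt_of_sq_le (sq_trace_transpose_mul_le_fin_two M hQ)

theorem stmt1_general {m : Type*} [Fintype m] (Zi Zj : Matrix m (Fin 2) ℝ) :
    IsLeast
      {x : ℝ | ∃ Q : Matrix (Fin 2) (Fin 2) ℝ, Qᵀ * Q = 1 ∧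
        x = trace ((Zj * Q - Zi)ᵀ * (Zj * Q - Zi))}
      (trace (Zi * Ziᵀ) + trace (Zj * Zjᵀ)
        - 2 * √(trace ((Zjᵀ * Zi)ᵀ * (Zjᵀ * Zi)) + 2 * |(Zjᵀ * Zi).det|)) :=
  isLeast_procrustes_of_isGreatest (isGreatest_trace_transpose_mul_fin_two (Zjᵀ * Zi))

/-- For `Z_i, Z_j ∈ ℝ^{n×2}` with `det(Z_jᵀ Z_i) ≥ 0`, writing
`Z_jᵀ Z_i = [[a,b],[c,d]]`, the minimum over orthogonal `Q ∈ O(2)` of `‖Z_j Q − Z_i‖_F²`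
equals `tr(Z_i Z_iᵀ) + tr(Z_j Z_jᵀ) − 2 √((a+d)² + (c−b)²)`. -/
theorem stmt1 (n : ℕ) (hn : 0 < n) (Zi Zj : Matrix (Fin n) (Fin 2) ℝ)
    (hdet : 0 ≤ (Zjᵀ * Zi).det)
    (a b c d : ℝ)
    (ha : a = (Zjᵀ * Zi) 0 0) (hb : b = (Zjᵀ * Zi) 0 1)
    (hc : c = (Zjᵀ * Zi) 1 0) (hd : d = (Zjᵀ * Zi) 1 1) :
    IsLeast
      {x : ℝ | ∃ Q : Matrix (Fin 2) (Fin 2) ℝ, Qᵀ * Q = 1 ∧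
        x = Matrix.trace ((Zj * Q - Zi)ᵀ * (Zj * Q - Zi))}
      (Matrix.trace (Zi * Ziᵀ) + Matrix.trace (Zj * Zjᵀ)
        - 2 * Real.sqrt ((a + d) ^ 2 + (c - b) ^ 2)) := by
  rw [ha, hb, hc, hd, ← trace_fin_two, trace_sq_add_sq_fin_two, ← abs_of_nonneg hdet]
  exact stmt1_general Zi Zj
end

section
/- Let d be a positive integer and let M ∈ ℝ^{d×d}. Then the maximum over all orthogonal matrices Q ∈ O(d) of tr(Qᵀ M) exists and equals tr((Mᵀ M)^{1/2}), where (Mᵀ M)^{1/2} denotes the unique positive-semidefinite square root of the positive-semidefinite matrix Mᵀ M. -/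
open Matrix

/-!
The matrices `S` and `M` satisfy `‖S x‖ = ‖M x‖` for every vector `x`, so `S x ↦ M x` is a
well-defined isometry on the range of `S`. Extending it to the whole space gives a polar
decomposition `M = U * S`, and `Q = U` yields the value `tr S`. It is maximal because, for any `Q`
with orthonormal columns, `(U - Q) * S * (U - Q)ᴴ` is positive semidefinite and its trace is
`2 tr S - 2 Re tr (Qᴴ * M)`.
-/

section IsometricFactorization

open Module

variable {𝕜 V V' : Type*} [RCLike 𝕜]
  [NormedAddCommGroup V] [InnerProductSpace 𝕜 V] [FiniteDimensional 𝕜 V]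
  [NormedAddCommGroup V'] [InnerProductSpace 𝕜 V'] [FiniteDimensional 𝕜 V']

theorem nonempty_linearIsometry_of_finrank_le (h : finrank 𝕜 V ≤ finrank 𝕜 V') :
    Nonempty (V →ₗᵢ[𝕜] V') := by
  let v := stdOrthonormalBasis 𝕜 V
  let w := stdOrthonormalBasis 𝕜 V' ∘ Fin.castLE h
  have hw : Orthonormal 𝕜 w :=
    (stdOrthonormalBasis 𝕜 V').orthonormal.comp _ (Fin.castLE_injective h)
  refine ⟨(v.toBasis.constr 𝕜 w).isometryOfOrthonormal (v := v.toBasis) ?_ ?_⟩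
  · simpa only [v.coe_toBasis] using v.orthonormal
  · convert hw using 1
    ext1 i
    exact v.toBasis.constr_basis 𝕜 w i

variable {W : Type*} [AddCommGroup W] [Module 𝕜 W]

theorem exists_linearIsometry_range_apply_eq_of_norm_eq {E F : Type*}
    [NormedAddCommGroup E] [NormedSpace 𝕜 E] [NormedAddCommGroup F] [NormedSpace 𝕜 F]
    {f : W →ₗ[𝕜] E} {g : W →ₗ[𝕜] F} (h : ∀ x, ‖f x‖ = ‖g x‖) :
    ∃ L : g.range →ₗᵢ[𝕜] E, ∀ x, L (g.rangeRestrict x) = f x := by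
  obtain ⟨s, hs⟩ := g.rangeRestrict.exists_rightInverse_of_surjective g.range_rangeRestrict
  have g_section (y : g.range) : g (s y) = y := congrArg Subtype.val (LinearMap.congr_fun hs y)
  refine ⟨⟨f ∘ₗ s, fun y ↦ ?_⟩, fun x ↦ ?_⟩
  · calc ‖f (s y)‖ = ‖g (s y)‖ := h _
      _ = ‖y‖ := by rw [g_section, Submodule.coe_norm]
  · have norm_map_sub : ‖f (s (g.rangeRestrict x) - x)‖ = 0 := by
      rw [h, map_sub, g_section, LinearMap.codRestrict_apply, sub_self, norm_zero]
    rwa [norm_eq_zero, map_sub, sub_eq_zero] at norm_map_sub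

theorem exists_linearIsometry_comp_eq_of_norm_eq (hdim : finrank 𝕜 V ≤ finrank 𝕜 V')
    {f : W →ₗ[𝕜] V'} {g : W →ₗ[𝕜] V} (h : ∀ x, ‖f x‖ = ‖g x‖) :
    ∃ U : V →ₗᵢ[𝕜] V', U.toLinearMap ∘ₗ g = f := by
  -- `LinearIsometry.extend` stays inside one space, so first embed `V` into `V'`.
  obtain ⟨J⟩ := nonempty_linearIsometry_of_finrank_le hdim
  obtain ⟨L, hL⟩ := exists_linearIsometry_range_apply_eq_of_norm_eq
    (f := f) (g := J.toLinearMap ∘ₗ g) fun x ↦ (h x).trans (J.norm_map _).symm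
  refine ⟨L.extend.comp J, LinearMap.ext fun x ↦ ?_⟩
  exact (L.extend_apply ((J.toLinearMap ∘ₗ g).rangeRestrict x)).trans (hL x)

end IsometricFactorization

section TraceMaximization

open scoped ComplexOrder

variable {𝕜 k m n : Type*} [RCLike 𝕜] [Fintype m] [Fintype n]

theorem norm_sq_toEuclideanLin [Fintype k] [DecidableEq k] (A : Matrix m k 𝕜)
    (x : EuclideanSpace 𝕜 k) :
    ‖A.toEuclideanLin x‖ ^ 2 = RCLike.re (inner 𝕜 x ((Aᴴ * A).toEuclideanLin x)) := by
  classical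
  rw [toLpLin_mul_same, LinearMap.comp_apply, toEuclideanLin_conjTranspose_eq_adjoint,
    LinearMap.adjoint_inner_right, inner_self_eq_norm_sq]

theorem exists_eq_mul_of_conjTranspose_mul_self_eq [Finite k] [DecidableEq n]
    (hcard : Fintype.card n ≤ Fintype.card m) {A : Matrix m k 𝕜} {B : Matrix n k 𝕜}
    (h : Aᴴ * A = Bᴴ * B) :
    ∃ U : Matrix m n 𝕜, Uᴴ * U = 1 ∧ A = U * B := by
  classical
  have := Fintype.ofFinite k
  have norm_eq (x : EuclideanSpace 𝕜 k) : ‖A.toEuclideanLin x‖ = ‖B.toEuclideanLin x‖ := by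
    rw [← sq_eq_sq₀ (norm_nonneg _) (norm_nonneg _), norm_sq_toEuclideanLin,
      norm_sq_toEuclideanLin, h]
  obtain ⟨L, hL⟩ := exists_linearIsometry_comp_eq_of_norm_eq
    (by simpa only [finrank_euclideanSpace] using hcard) norm_eq
  obtain ⟨U, hU⟩ := toEuclideanLin.surjective L.toLinearMap
  refine ⟨U, toEuclideanLin.injective ?_, toEuclideanLin.injective ?_⟩
  · rw [toLpLin_mul_same, toEuclideanLin_conjTranspose_eq_adjoint, hU, toLpLin_one]
    exact L.adjoint_comp_self'
  · rw [toLpLin_mul_same, hU, hL]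

theorem two_mul_re_trace_conjTranspose_mul_mul_le {S : Matrix n n 𝕜} (hS : S.PosSemidef)
    (A B : Matrix m n 𝕜) :
    2 * RCLike.re (Aᴴ * B * S).trace ≤
      RCLike.re (Aᴴ * A * S).trace + RCLike.re (Bᴴ * B * S).trace := by
  have trace_sub_nonneg : 0 ≤ RCLike.re ((B - A) * S * (B - A)ᴴ).trace :=
    (RCLike.nonneg_iff.mp (hS.mul_mul_conjTranspose_same (B - A)).trace_nonneg).1
  have trace_cycle (C D : Matrix m n 𝕜) : (C * S * Dᴴ).trace = (Dᴴ * C * S).trace :=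
    trace_mul_cycle C S Dᴴ
  have re_trace_swap : RCLike.re (Bᴴ * A * S).trace = RCLike.re (Aᴴ * B * S).trace :=
    calc RCLike.re (Bᴴ * A * S).trace = RCLike.re (Bᴴ * A * S)ᴴ.trace := by
          rw [trace_conjTranspose, RCLike.star_def, RCLike.conj_re]
      _ = RCLike.re (S * (Aᴴ * B)).trace := by
          rw [conjTranspose_mul, conjTranspose_mul, conjTranspose_conjTranspose,
            hS.isHermitian.eq]
      _ = RCLike.re (Aᴴ * B * S).trace := by rw [trace_mul_comm]
  simp only [conjTranspose_sub, Matrix.sub_mul, Matrix.mul_sub, trace_sub, map_sub, trace_cycle,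
    re_trace_swap] at trace_sub_nonneg
  linarith

theorem re_trace_conjTranspose_mul_mul_le [DecidableEq n] {S : Matrix n n 𝕜} (hS : S.PosSemidef)
    {Q U : Matrix m n 𝕜} (hQ : Qᴴ * Q = 1) (hU : Uᴴ * U = 1) :
    RCLike.re (Qᴴ * (U * S)).trace ≤ RCLike.re S.trace := by
  have := two_mul_re_trace_conjTranspose_mul_mul_le hS Q U
  rw [hQ, hU, Matrix.one_mul, Matrix.mul_assoc] at this
  linarith

theorem stmt3_general [DecidableEq n] (hcard : Fintype.card n ≤ Fintype.card m)
    (M : Matrix m n 𝕜) {S : Matrix n n 𝕜} (hS : S.PosSemidef) (hS_sq : S * S = Mᴴ * M) :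
    IsGreatest
      {x : ℝ | ∃ Q : Matrix m n 𝕜, Qᴴ * Q = 1 ∧ x = RCLike.re (Qᴴ * M).trace}
      (RCLike.re S.trace) := by
  obtain ⟨U, hU, rfl⟩ : ∃ U : Matrix m n 𝕜, Uᴴ * U = 1 ∧ M = U * S :=
    exists_eq_mul_of_conjTranspose_mul_self_eq hcard (by rw [hS.isHermitian.eq, hS_sq])
  refine ⟨⟨U, hU, ?_⟩, ?_⟩
  · rw [← Matrix.mul_assoc, hU, Matrix.one_mul]
  · rintro x ⟨Q, hQ, rfl⟩
    exact re_trace_conjTranspose_mul_mul_le hS hQ hU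

end TraceMaximization

/-- For `M ∈ ℝ^{d×d}`, the maximum over orthogonal `Q ∈ O(d)` of `tr(Qᵀ M)`
exists and equals `tr((Mᵀ M)^{1/2})`, where `S` below is the unique positive-semidefinite
square root of the positive-semidefinite matrix `Mᵀ M`. -/
theorem stmt3 (d : ℕ) (hd : 0 < d) (M : Matrix (Fin d) (Fin d) ℝ)
    (S : Matrix (Fin d) (Fin d) ℝ) (hS : S.PosSemidef) (hS_sq : S * S = Mᵀ * M) :
    IsGreatest
      {x : ℝ | ∃ Q : Matrix (Fin d) (Fin d) ℝ, Qᵀ * Q = 1 ∧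
        x = Matrix.trace (Qᵀ * M)}
      (Matrix.trace S) := by
  simpa only [conjTranspose_eq_transpose_of_trivial, RCLike.re_to_real] using
    stmt3_general le_rfl M hS (by rwa [conjTranspose_eq_transpose_of_trivial])
end

section
/- Let n, d be positive integers and let Z_i, Z_j ∈ ℝ^{n×d}. Set G_i = Z_i Z_iᵀ and G_j = Z_j Z_jᵀ. Then the minimum over all orthogonal matrices Q ∈ O(d) of the squared Frobenius norm ‖Z_j Q − Z_i‖_F² equals tr(G_i) + tr(G_j) − 2·tr((G_i^{1/2} G_j G_i^{1/2})^{1/2}), where S^{1/2} denotes the unique positive-semidefinite square root of a positive-semidefinite matrix S. -/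
open Matrix

/-!
Expanding the square, `‖Z_j Q − Z_i‖² = tr G_i + tr G_j − 2 Re tr (Q M)` with `M = Z_iᴴ Z_j`, so
one has to maximise `Re tr (Q M)` over unitary `Q`. Writing `M = U |M|` (polar decomposition), the
maximum is `tr |M|`, the trace norm of `M`: it is attained at `Q = Uᴴ`, and `Re tr (V T) ≤ tr T`
for unitary `V` and positive semidefinite `T` because `(V - 1) T (V - 1)ᴴ` has nonnegative trace.

The trace norm of a matrix `A` is determined by either of `Aᴴ A` and `A Aᴴ`, since these have the
same nonzero eigenvalues. As `A Aᴴ = Z_jᴴ G_i Z_j` both for `A = Mᴴ` and for `A = Z_jᴴ G_i^{1/2}`,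
the trace norm of `M` is `tr (G_i^{1/2} G_j G_i^{1/2})^{1/2}`.
-/

section UnitaryFactor

variable {𝕜 : Type*} [RCLike 𝕜]

theorem exists_linearIsometryEquiv_apply_eq_of_norm_eq {V F : Type*} [AddCommGroup V] [Module 𝕜 V]
    [NormedAddCommGroup F] [InnerProductSpace 𝕜 F] [FiniteDimensional 𝕜 F] {f g : V →ₗ[𝕜] F}
    (h : ∀ x, ‖f x‖ = ‖g x‖) : ∃ e : F ≃ₗᵢ[𝕜] F, ∀ x, e (f x) = g x := by
  have hker : LinearMap.ker f ≤ LinearMap.ker g := fun x hx => by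
    rw [LinearMap.mem_ker, ← norm_eq_zero, ← h x, LinearMap.mem_ker.1 hx, norm_zero]
  let φ : LinearMap.range f →ₗ[𝕜] F :=
    (LinearMap.ker f).liftQ g hker ∘ₗ f.quotKerEquivRange.symm.toLinearMap
  have hφ (x : V) : φ ⟨f x, x, rfl⟩ = g x :=
    congrArg ((LinearMap.ker f).liftQ g hker) (f.quotKerEquivRange_symm_apply_image x ⟨x, rfl⟩)
  let L : LinearMap.range f →ₗᵢ[𝕜] F :=
    ⟨φ, by rintro ⟨_, x, rfl⟩; rw [hφ, Submodule.coe_norm, h]⟩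
  exact ⟨L.extend.toLinearIsometryEquiv rfl, fun x => (L.extend_apply ⟨f x, x, rfl⟩).trans (hφ x)⟩

variable {m n : Type*} [Fintype m]

theorem norm_toEuclideanLin_eq_of_conjTranspose_mul_self_eq [Fintype n] [DecidableEq n]
    {A B : Matrix m n 𝕜} (h : Aᴴ * A = Bᴴ * B) (x : EuclideanSpace 𝕜 n) :
    ‖toEuclideanLin A x‖ = ‖toEuclideanLin B x‖ := by
  classical
  have norm_sq (C : Matrix m n 𝕜) :
      ‖toEuclideanLin C x‖ ^ 2 = RCLike.re (inner 𝕜 x (toEuclideanLin (Cᴴ * C) x)) := by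
    have hmul : toEuclideanLin (Cᴴ * C) x = toEuclideanLin Cᴴ (toEuclideanLin C x) := by
      simp [toLpLin_apply]
    rw [hmul, toEuclideanLin_conjTranspose_eq_adjoint, LinearMap.adjoint_inner_right,
      inner_self_eq_norm_sq]
  rw [← sq_eq_sq₀ (norm_nonneg _) (norm_nonneg _), norm_sq, norm_sq, h]

theorem exists_mem_unitaryGroup_mul_eq [Finite n] [DecidableEq m] {A B : Matrix m n 𝕜}
    (h : Aᴴ * A = Bᴴ * B) : ∃ U ∈ unitaryGroup m 𝕜, U * A = B := by
  classical
  cases nonempty_fintype n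
  obtain ⟨e, he⟩ := exists_linearIsometryEquiv_apply_eq_of_norm_eq
    (norm_toEuclideanLin_eq_of_conjTranspose_mul_self_eq h)
  let b := EuclideanSpace.basisFun m 𝕜
  let U : Matrix m m 𝕜 := LinearMap.toMatrix b.toBasis b.toBasis e.toLinearMap
  have hU : toEuclideanLin U = e.toLinearMap := by
    rw [toEuclideanLin_eq_toLin_orthonormal, Matrix.toLin_toMatrix]
  refine ⟨U, e.toMatrix_mem_unitaryGroup b b, toEuclideanLin.injective (LinearMap.ext fun x => ?_)⟩
  calc toEuclideanLin (U * A) x = toEuclideanLin U (toEuclideanLin A x) := by simp [toLpLin_apply]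
    _ = e (toEuclideanLin A x) := by rw [hU]; rfl
    _ = toEuclideanLin B x := he x

end UnitaryFactor

section TraceNorm

open scoped ComplexOrder MatrixOrder

variable {m n k : Type*} [Fintype m] [Fintype n] [Fintype k]

theorem sum_map_roots_charpoly_mul_comm [DecidableEq m] [DecidableEq n] {R M : Type*} [CommRing R]
    [IsDomain R] [AddCommMonoid M] (A : Matrix m n R) (B : Matrix n m R) {f : R → M}
    (hf : f 0 = 0) :
    ((A * B).charpoly.roots.map f).sum = ((B * A).charpoly.roots.map f).sum := by
  have sum_map_roots (i : ℕ) {p : Polynomial R} (hp : p.Monic) :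
      ((Polynomial.X ^ i * p).roots.map f).sum = (p.roots.map f).sum := by
    rw [Polynomial.roots_mul ((Polynomial.monic_X_pow i).mul hp).ne_zero]
    simp [Multiset.map_nsmul, Multiset.sum_nsmul, hf]
  rw [← sum_map_roots (Fintype.card n) (charpoly_monic _), charpoly_mul_comm',
    sum_map_roots _ (charpoly_monic _)]

variable {𝕜 : Type*} [RCLike 𝕜]

theorem re_trace_conjTranspose (A : Matrix n n 𝕜) :
    RCLike.re Aᴴ.trace = RCLike.re A.trace := by
  rw [trace_conjTranspose, RCLike.star_def, RCLike.conj_re]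

theorem trace_cfc_eq_sum_map_roots_charpoly [DecidableEq n] {A : Matrix n n 𝕜}
    (hA : A.IsHermitian) (f : ℝ → ℝ) :
    (cfc f A).trace = (A.charpoly.roots.map fun z => (f (RCLike.re z) : 𝕜)).sum := by
  rw [hA.cfc_eq, IsHermitian.cfc, Unitary.conjStarAlgAut_apply, trace_mul_cycle,
    hA.roots_charpoly_eq_eigenvalues]
  simp [trace]

theorem trace_cfc_conjTranspose_mul_self [DecidableEq m] [DecidableEq n] (A : Matrix m n 𝕜)
    {f : ℝ → ℝ} (hf : f 0 = 0) : (cfc f (Aᴴ * A)).trace = (cfc f (A * Aᴴ)).trace := by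
  rw [trace_cfc_eq_sum_map_roots_charpoly (isHermitian_conjTranspose_mul_self A),
    trace_cfc_eq_sum_map_roots_charpoly (isHermitian_mul_conjTranspose_self A),
    sum_map_roots_charpoly_mul_comm _ _ (by simp [hf])]

theorem sqrt_eq_cfc_real_sqrt [DecidableEq n] {A : Matrix n n 𝕜} (hA : A.PosSemidef) :
    CFC.sqrt A = cfc Real.sqrt A := by
  rw [CFC.sqrt_eq_real_sqrt A hA.nonneg, cfcₙ_eq_cfc]

/-- The trace norm (nuclear norm, Schatten 1-norm) `tr |A|` of a rectangular matrix, with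
`|A| = (Aᴴ A)^{1/2}`. The trace of `|A|` is a nonnegative real, so nothing is lost in taking its
real part. -/
noncomputable def traceNorm [DecidableEq n] (A : Matrix m n 𝕜) : ℝ :=
  RCLike.re (CFC.sqrt (Aᴴ * A)).trace

theorem traceNorm_eq_re_trace_of_mul_self_eq [DecidableEq n] {A : Matrix m n 𝕜} {S : Matrix n n 𝕜}
    (hS : S.PosSemidef) (hSA : S * S = Aᴴ * A) : traceNorm A = RCLike.re S.trace := by
  rw [traceNorm, CFC.sqrt_unique hSA hS.nonneg]

theorem traceNorm_conjTranspose [DecidableEq m] [DecidableEq n] (A : Matrix m n 𝕜) :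
    traceNorm Aᴴ = traceNorm A := by
  rw [traceNorm, traceNorm, conjTranspose_conjTranspose,
    sqrt_eq_cfc_real_sqrt (posSemidef_conjTranspose_mul_self A),
    sqrt_eq_cfc_real_sqrt (posSemidef_self_mul_conjTranspose A),
    trace_cfc_conjTranspose_mul_self A Real.sqrt_zero]

theorem traceNorm_eq_of_mul_conjTranspose_self_eq [DecidableEq n] [DecidableEq k]
    {A : Matrix m n 𝕜} {B : Matrix m k 𝕜} (h : A * Aᴴ = B * Bᴴ) :
    traceNorm A = traceNorm B := by
  classical
  rw [← traceNorm_conjTranspose A, ← traceNorm_conjTranspose B, traceNorm, traceNorm,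
    conjTranspose_conjTranspose, conjTranspose_conjTranspose, h]

variable [DecidableEq n]

theorem exists_mem_unitaryGroup_mul_sqrt_eq (A : Matrix n n 𝕜) :
    ∃ U ∈ unitaryGroup n 𝕜, U * CFC.sqrt (Aᴴ * A) = A := by
  apply exists_mem_unitaryGroup_mul_eq
  rw [(CFC.sqrt_nonneg (Aᴴ * A)).posSemidef.isHermitian.eq,
    CFC.sqrt_mul_sqrt_self _ (posSemidef_conjTranspose_mul_self A).nonneg]

theorem re_trace_mul_le_of_mem_unitaryGroup {U T : Matrix n n 𝕜} (hU : U ∈ unitaryGroup n 𝕜)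
    (hT : T.PosSemidef) : RCLike.re (U * T).trace ≤ RCLike.re T.trace := by
  have nonneg : 0 ≤ RCLike.re ((U - 1) * T * (U - 1)ᴴ).trace :=
    (RCLike.nonneg_iff.1 (hT.mul_mul_conjTranspose_same (U - 1)).trace_nonneg).1
  have conj_trace : (U * T * Uᴴ).trace = T.trace := by
    rw [trace_mul_cycle, ← star_eq_conjTranspose, mem_unitaryGroup_iff'.1 hU, one_mul]
  have re_symm : RCLike.re (T * Uᴴ).trace = RCLike.re (U * T).trace := by
    rw [← re_trace_conjTranspose, conjTranspose_mul, conjTranspose_conjTranspose,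
      hT.isHermitian.eq]
  simp only [conjTranspose_sub, conjTranspose_one, sub_mul, mul_sub, one_mul, mul_one, trace_sub,
    map_sub, conj_trace, re_symm] at nonneg
  linarith

theorem isGreatest_re_trace_mul_traceNorm (A : Matrix n n 𝕜) :
    IsGreatest ((fun Q => RCLike.re (Q * A).trace) '' unitaryGroup n 𝕜) (traceNorm A) := by
  obtain ⟨U, hU, hUA⟩ := exists_mem_unitaryGroup_mul_sqrt_eq A
  constructor
  · refine ⟨Uᴴ, Unitary.star_mem hU, ?_⟩
    have hUstar : Uᴴ * A = CFC.sqrt (Aᴴ * A) := by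
      rw [← one_mul (CFC.sqrt _), ← mem_unitaryGroup_iff'.1 hU, mul_assoc, hUA,
        star_eq_conjTranspose]
    simp only [hUstar, traceNorm]
  · rintro _ ⟨Q, hQ, rfl⟩
    calc RCLike.re (Q * A).trace = RCLike.re (Q * U * CFC.sqrt (Aᴴ * A)).trace := by
          rw [mul_assoc, hUA]
      _ ≤ traceNorm A :=
          re_trace_mul_le_of_mem_unitaryGroup (mul_mem hQ hU) (CFC.sqrt_nonneg _).posSemidef

end TraceNorm

section Procrustes

variable {𝕜 : Type*} [RCLike 𝕜] {n d : Type*} [Fintype n] [Fintype d] [DecidableEq d]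

theorem re_trace_conjTranspose_mul_self_mul_sub (A B : Matrix n d 𝕜) {Q : Matrix d d 𝕜}
    (hQ : Q ∈ unitaryGroup d 𝕜) :
    RCLike.re ((B * Q - A)ᴴ * (B * Q - A)).trace =
      RCLike.re (A * Aᴴ).trace + RCLike.re (B * Bᴴ).trace -
        2 * RCLike.re (Q * (Aᴴ * B)).trace := by
  have gram_Q : ((B * Q)ᴴ * (B * Q)).trace = (B * Bᴴ).trace := by
    rw [trace_mul_comm, conjTranspose_mul, Matrix.mul_assoc, ← Matrix.mul_assoc Q,
      ← star_eq_conjTranspose Q, mem_unitaryGroup_iff.1 hQ, Matrix.one_mul]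
  have cross : (Aᴴ * (B * Q)).trace = (Q * (Aᴴ * B)).trace := by
    rw [← Matrix.mul_assoc, trace_mul_comm]
  have cross_conj : RCLike.re ((B * Q)ᴴ * A).trace = RCLike.re (Aᴴ * (B * Q)).trace := by
    rw [← re_trace_conjTranspose, conjTranspose_mul, conjTranspose_conjTranspose]
  simp only [conjTranspose_sub, Matrix.sub_mul, Matrix.mul_sub, trace_sub, map_sub, gram_Q,
    cross_conj, cross, trace_mul_comm Aᴴ A]
  ring

theorem isLeast_procrustes (A B : Matrix n d 𝕜) :
    IsLeast
      ((fun Q : Matrix d d 𝕜 => RCLike.re ((B * Q - A)ᴴ * (B * Q - A)).trace) '' unitaryGroup d 𝕜)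
      (RCLike.re (A * Aᴴ).trace + RCLike.re (B * Bᴴ).trace - 2 * traceNorm (Aᴴ * B)) := by
  rw [Set.image_congr fun Q hQ => re_trace_conjTranspose_mul_self_mul_sub A B hQ]
  have antitone : Antitone fun t : ℝ =>
      RCLike.re (A * Aᴴ).trace + RCLike.re (B * Bᴴ).trace - 2 * t :=
    fun s t hst => sub_le_sub_left (mul_le_mul_of_nonneg_left hst zero_le_two) _
  simpa only [Set.image_image] using
    antitone.map_isGreatest (isGreatest_re_trace_mul_traceNorm (Aᴴ * B))

open scoped ComplexOrder in
theorem stmt4_general {r : Type*} [Fintype r] (Zi Zj : Matrix n d 𝕜) (R : Matrix n r 𝕜)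
    (hR : R * Rᴴ = Zi * Ziᴴ) (S : Matrix r r 𝕜) (hS : S.PosSemidef)
    (hS_sq : S * S = Rᴴ * (Zj * Zjᴴ) * R) :
    IsLeast
      {x : ℝ | ∃ Q : Matrix d d 𝕜, Qᴴ * Q = 1 ∧
        x = RCLike.re (trace ((Zj * Q - Zi)ᴴ * (Zj * Q - Zi)))}
      (RCLike.re (trace (Zi * Ziᴴ)) + RCLike.re (trace (Zj * Zjᴴ)) - 2 * RCLike.re (trace S)) := by
  classical
  have gram_eq : (Zjᴴ * Zi) * (Zjᴴ * Zi)ᴴ = (Zjᴴ * R) * (Zjᴴ * R)ᴴ := by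
    simp only [conjTranspose_mul, conjTranspose_conjTranspose, Matrix.mul_assoc]
    rw [← Matrix.mul_assoc Zi, ← Matrix.mul_assoc R, hR]
  have traceNorm_eq : traceNorm (Ziᴴ * Zj) = RCLike.re S.trace := calc
    traceNorm (Ziᴴ * Zj) = traceNorm (Zjᴴ * Zi) := by
      rw [← traceNorm_conjTranspose, conjTranspose_mul, conjTranspose_conjTranspose]
    _ = traceNorm (Zjᴴ * R) := traceNorm_eq_of_mul_conjTranspose_self_eq gram_eq
    _ = RCLike.re S.trace := traceNorm_eq_re_trace_of_mul_self_eq hS <| by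
      simp only [hS_sq, conjTranspose_mul, conjTranspose_conjTranspose, Matrix.mul_assoc]
  rw [← traceNorm_eq]
  convert isLeast_procrustes Zi Zj using 1
  ext x
  simp only [Set.mem_ofPred_eq, Set.mem_image, SetLike.mem_coe, mem_unitaryGroup_iff',
    star_eq_conjTranspose, eq_comm]

end Procrustes

/-- For `Z_i, Z_j ∈ ℝ^{n×d}` with Gram matrices `G_i = Z_i Z_iᵀ`,
`G_j = Z_j Z_jᵀ`, the minimum over orthogonal `Q ∈ O(d)` of `‖Z_j Q − Z_i‖_F²` equals
`tr(G_i) + tr(G_j) − 2 tr((G_i^{1/2} G_j G_i^{1/2})^{1/2})`.  Here `R` is the unique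
positive-semidefinite square root of `G_i`, and `S` is the unique positive-semidefinite
square root of `G_i^{1/2} G_j G_i^{1/2}`. -/
theorem stmt4 (n d : ℕ) (hn : 0 < n) (hd : 0 < d)
    (Zi Zj : Matrix (Fin n) (Fin d) ℝ)
    (R : Matrix (Fin n) (Fin n) ℝ) (hR : R.PosSemidef) (hR_sq : R * R = Zi * Ziᵀ)
    (S : Matrix (Fin n) (Fin n) ℝ) (hS : S.PosSemidef)
    (hS_sq : S * S = R * (Zj * Zjᵀ) * R) :
    IsLeast
      {x : ℝ | ∃ Q : Matrix (Fin d) (Fin d) ℝ, Qᵀ * Q = 1 ∧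
        x = Matrix.trace ((Zj * Q - Zi)ᵀ * (Zj * Q - Zi))}
      (Matrix.trace (Zi * Ziᵀ) + Matrix.trace (Zj * Zjᵀ) - 2 * Matrix.trace S) := by
  have hRt : Rᵀ = R := by simpa using hR.isHermitian.eq
  simpa using stmt4_general Zi Zj R (by simpa [hRt] using hR_sq) S hS (by simpa [hRt] using hS_sq)
end
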